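/- Let δe, δb, δr, f be relations on a type α and (ms₁, ms₂) the least pair of subsets of α closed under rules (R1)–(R6); define mt = δb ∪ δr ∪ {(s,t) | t ∈ ms₂}. Let δ''p be a relation on α with δ''p ∩ δb = ∅, δ''p ∩ δr = ∅, δ''p ∩ δe = ∅, and f ∩ δe = ∅, and let S'' ⊆ α be such that every p''[]₂δe[]f prefix whose initial state lies in S'' contains no step in δb. Then for all s, t ∈ S'' with (s,t) ∈ δ''p, we have (s,t) ∉ mt. -/

import Mathlib

variable {α : Type*}

/-- The closure rules (R1)–(R6) computed by the failsafe fault-tolerance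
addition algorithm, for a pair of sets `(ms₁, ms₂)`. -/
def ClosedMS (δe δb δr f : Set (α × α)) (ms₁ ms₂ : Set α) : Prop :=
  -- (R1)
  (∀ s t, (s, t) ∈ f → (s, t) ∈ δb → s ∈ ms₁) ∧
  -- (R2)
  (ms₁ ⊆ ms₂) ∧
  -- (R3)
  (∀ s t, (s, t) ∈ δe → (s, t) ∈ δb → s ∈ ms₂) ∧
  -- (R4)
  (∀ s t, (s, t) ∈ f → t ∈ ms₂ → s ∈ ms₁) ∧
  -- (R5)
  (∀ s, (∃ t, ((s, t) ∈ δe ∧ t ∈ ms₁) ∨ ((s, t) ∈ δe ∧ (s, t) ∈ δb)) →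
    (∀ u, (s, u) ∈ δb ∨ (s, u) ∈ δr ∨ u ∈ ms₂) → s ∈ ms₁) ∧
  -- (R6)
  (∀ s t, (s, t) ∈ δe → t ∈ ms₁ → s ∈ ms₂)

/-- `(ms₁, ms₂)` is the least pair of sets closed under rules (R1)–(R6). -/
def LeastMS (δe δb δr f : Set (α × α)) (ms₁ ms₂ : Set α) : Prop :=
  ClosedMS δe δb δr f ms₁ ms₂ ∧
  ∀ ms₁' ms₂', ClosedMS δe δb δr f ms₁' ms₂' → ms₁ ⊆ ms₁' ∧ ms₂ ⊆ ms₂'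

/-- `PrefixF δp δe f σ n`: the finite sequence `σ 0, …, σ n` is a `p[]₂δe[]f` prefix. -/
def PrefixF (δp δe f : Set (α × α)) (σ : ℕ → α) (n : ℕ) : Prop :=
  (∀ i < n, (σ i, σ (i + 1)) ∈ δp ∪ δe ∪ f) ∧
  (∀ i, i + 2 ≤ n → (σ i, σ (i + 1)) ∈ δe → (∃ t, (σ (i + 1), t) ∈ δp) →
    (σ (i + 1), σ (i + 2)) ∈ δp ∪ f)

def consSeq (s : α) (σ : ℕ → α) : ℕ → α
  | 0 => s
  | n + 1 => σ n

theorem prefix_cons {δp δe f : Set (α × α)} {σ : ℕ → α} {n : ℕ} {s : α}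
    (h : PrefixF δp δe f σ n) (h1 : (s, σ 0) ∈ δp ∪ δe ∪ f)
    (h2 : 1 ≤ n → (s, σ 0) ∈ δe → (∃ t, (σ 0, t) ∈ δp) → (σ 0, σ 1) ∈ δp ∪ f) :
    PrefixF δp δe f (consSeq s σ) (n + 1) := by
  refine ⟨?_, ?_⟩
  · intro i hi
    cases i with
    | zero => exact h1
    | succ i => exact h.1 i (by omega)
  · intro i hi
    cases i with
    | zero => exact h2 (by omega)
    | succ i => exact h.2 i (by omega)

def BadFrom (δp δe δb f : Set (α × α)) (s : α) (σ : ℕ → α) : Prop :=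
  σ 0 = s ∧ ∃ n, PrefixF δp δe f σ n ∧ ∃ i < n, (σ i, σ (i + 1)) ∈ δb

theorem bad_one {δp δe δb f : Set (α × α)} {s t : α}
    (h1 : (s, t) ∈ δp ∪ δe ∪ f) (hb : (s, t) ∈ δb) :
    BadFrom δp δe δb f s (consSeq s fun _ => t) := by
  refine ⟨rfl, 1, prefix_cons (n := 0) ⟨?_, ?_⟩ h1 ?_, 0, one_pos, hb⟩
  · intro i hi; omega
  · intro i hi; omega
  · intro hi; omega

theorem bad_cons {δp δe δb f : Set (α × α)} {s t : α} {σ : ℕ → α}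
    (h : BadFrom δp δe δb f t σ) (h1 : (s, t) ∈ δp ∪ δe ∪ f)
    (h2 : (s, t) ∈ δe → (∃ u, (t, u) ∈ δp) → (t, σ 1) ∈ δp ∪ f) :
    BadFrom δp δe δb f s (consSeq s σ) := by
  obtain ⟨rfl, n, hp, i, hi, hb⟩ := h
  exact ⟨rfl, n + 1, prefix_cons hp h1 (fun _ => h2), i + 1, by omega, hb⟩

theorem stmt15 (δe δb δr f δ''p : Set (α × α)) (ms₁ ms₂ : Set α)
    (hms : LeastMS δe δb δr f ms₁ ms₂)
    (hpb : δ''p ∩ δb = ∅) (hpr : δ''p ∩ δr = ∅)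
    (hpe : δ''p ∩ δe = ∅) (hfe : f ∩ δe = ∅)
    (S'' : Set α)
    (hSafe : ∀ (σ : ℕ → α) (n : ℕ), PrefixF δ''p δe f σ n → σ 0 ∈ S'' →
      ∀ i < n, (σ i, σ (i + 1)) ∉ δb) :
    ∀ s t, s ∈ S'' → t ∈ S'' → (s, t) ∈ δ''p →
      (s, t) ∉ δb ∪ δr ∪ {p : α × α | p.2 ∈ ms₂} := by
  have dis : ∀ {A B : Set (α × α)}, A ∩ B = ∅ → ∀ {x}, x ∈ A → x ∈ B → False := by
    intro A B h x ha hb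
    have : x ∈ A ∩ B := ⟨ha, hb⟩
    rw [h] at this
    exact this
  have key : ClosedMS δe δb δr f
      {s | ∃ σ, BadFrom δ''p δe δb f s σ ∧ ((∃ u, (s, u) ∈ δ''p) → (s, σ 1) ∈ δ''p ∪ f)}
      {s | ∃ σ, BadFrom δ''p δe δb f s σ} := by
    refine ⟨?_, ?_, ?_, ?_, ?_, ?_⟩
    · intro s t hf hb
      exact ⟨_, bad_one (Or.inr hf) hb, fun _ => Or.inr hf⟩
    · rintro s ⟨σ, h, -⟩
      exact ⟨σ, h⟩
    · intro s t he hb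
      exact ⟨_, bad_one (Or.inl (Or.inr he)) hb⟩
    · rintro s t hf ⟨σ, h⟩
      refine ⟨_, bad_cons h (Or.inr hf) (fun he => (dis hfe hf he).elim), fun _ => Or.inr ?_⟩
      change (s, σ 0) ∈ f
      rw [h.1]; exact hf
    · rintro s ⟨t, ht⟩ hu
      by_cases hp : ∃ u, (s, u) ∈ δ''p
      · obtain ⟨u, hp⟩ := hp
        rcases hu u with h | h | ⟨σ, h⟩
        · exact (dis hpb hp h).elim
        · exact (dis hpr hp h).elim
        · refine ⟨_, bad_cons h (Or.inl (Or.inl hp)) (fun he => (dis hpe hp he).elim),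
            fun _ => Or.inl ?_⟩
          change (s, σ 0) ∈ δ''p
          rw [h.1]; exact hp
      · rcases ht with ⟨he, σ, h, h'⟩ | ⟨he, hb⟩
        · exact ⟨_, bad_cons h (Or.inl (Or.inr he)) (fun _ => h'), fun h => (hp h).elim⟩
        · exact ⟨_, bad_one (Or.inl (Or.inr he)) hb, fun h => (hp h).elim⟩
    · rintro s t he ⟨σ, h, h'⟩
      exact ⟨_, bad_cons h (Or.inl (Or.inr he)) (fun _ => h')⟩
  rintro s t - ht hp ((h | h) | h)
  · exact dis hpb hp h
  · exact dis hpr hp h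
  · obtain ⟨σ, h0, n, hpre, i, hi, hb⟩ := (hms.2 _ _ key).2 h
    exact hSafe σ n hpre (h0 ▸ ht) i hi hb
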